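/- For n ≥ 3, among all n-vertex unicyclic graphs whose m segments are all of length 1 (so n = m), the graph U^1_n obtained by attaching one pendant vertex to each of two vertices of a triangle and n - 5 pendant vertices to the third vertex maximizes the Merrifield–Simmons index: σ(U^1_n) ≥ σ(G) for any unicyclic graph G on n vertices with n segments. -/

import Mathlib

open SimpleGraph

/-- A subtree of `G` is a nonempty connected acyclic subgraph of `G`. -/
def IsSubtree {V : Type*} {G : SimpleGraph V} (H : G.Subgraph) : Prop :=
  H.Connected ∧ H.coe.IsAcyclic

/-- `nk G k` : the number of subtrees of `G` with exactly `k` vertices. -/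
noncomputable def nk {V : Type*} (G : SimpleGraph V) (k : ℕ) : ℕ :=
  Nat.card {H : G.Subgraph // IsSubtree H ∧ H.verts.ncard = k}

/-- number of `k`-vertex subtrees of `G` containing the vertex `v`. -/
noncomputable def nkAt {V : Type*} (G : SimpleGraph V) (v : V) (k : ℕ) : ℕ :=
  Nat.card {H : G.Subgraph // IsSubtree H ∧ v ∈ H.verts ∧ H.verts.ncard = k}

/-- `nT G` : total number of subtrees of `G`, counting the empty subtree once. -/
noncomputable def nT {V : Type*} (G : SimpleGraph V) : ℕ :=
  1 + Nat.card {H : G.Subgraph // IsSubtree H}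

/-- number of subtrees of `G` containing the vertex `v`. -/
noncomputable def nAt {V : Type*} (G : SimpleGraph V) (v : V) : ℕ :=
  Nat.card {H : G.Subgraph // IsSubtree H ∧ v ∈ H.verts}

/-- the path on `n` vertices `0 - 1 - ⋯ - (n-1)`. -/
def pathG (n : ℕ) : SimpleGraph (Fin n) :=
  SimpleGraph.fromRel (fun u v => v.val = u.val + 1)

/-- the cycle on `n` vertices. -/
def cycG (n : ℕ) : SimpleGraph (Fin n) :=
  SimpleGraph.fromRel (fun u v => v.val = u.val + 1 ∨ (u.val = 0 ∧ v.val + 1 = n))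

/-- the star on `n` vertices with center `0`. -/
def starG (n : ℕ) : SimpleGraph (Fin n) :=
  SimpleGraph.fromRel (fun u _ => u.val = 0)

/-- `USnl n l` : the cycle `C_l` (on `0,…,l-1`) with `n - l` pendant vertices attached
to the vertex `0`. -/
def USnl (n l : ℕ) : SimpleGraph (Fin n) :=
  SimpleGraph.fromRel (fun u v =>
    (v.val = u.val + 1 ∧ v.val < l) ∨ (u.val = 0 ∧ v.val + 1 = l) ∨ (u.val = 0 ∧ l ≤ v.val))

/-- `UPnl n l` : the cycle `C_l` (on `0,…,l-1`) with a pendant path of length `n - l`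
attached to the vertex `l-1`. -/
def UPnl (n l : ℕ) : SimpleGraph (Fin n) :=
  SimpleGraph.fromRel (fun u v => v.val = u.val + 1 ∨ (u.val = 0 ∧ v.val + 1 = l))

/-- `US_n` : the star `S_n` together with an edge joining two of its leaves. -/
def USn (n : ℕ) : SimpleGraph (Fin n) := USnl n 3

/-- `UP_n` : a triangle with a pendant path, obtained by identifying a vertex of `C_3`
with an end of `P_{n-2}`. -/
def UPn (n : ℕ) : SimpleGraph (Fin n) := UPnl n 3

/-- the Merrifield–Simmons index: the number of independent vertex subsets
(including the empty set). -/
noncomputable def sigmaG {V : Type*} (G : SimpleGraph V) : ℕ :=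
  Nat.card {s : Set V // ∀ u ∈ s, ∀ v ∈ s, ¬ G.Adj u v}

/-- the Hosoya index: the number of matchings (including the empty one). -/
noncomputable def hosoya {V : Type*} (G : SimpleGraph V) : ℕ :=
  Nat.card {s : Set (Sym2 V) // s ⊆ G.edgeSet ∧
    s.Pairwise (fun e f => ∀ v, ¬(v ∈ e ∧ v ∈ f))}

/-- the Wiener index: the sum of the distances over all unordered pairs of vertices. -/
noncomputable def wiener {V : Type*} [Fintype V] (G : SimpleGraph V) : ℕ :=
  (∑ u : V, ∑ v : V, G.dist u v) / 2

/-- `U¹_n` : a triangle on `0, 1, 2`, a pendant vertex `3` attached to `0`, a pendant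
vertex `4` attached to `1`, and `n - 5` pendant vertices `5,…,n-1` attached to `2`. -/
def U1n (n : ℕ) : SimpleGraph (Fin n) :=
  SimpleGraph.fromRel (fun u v =>
    (u.val = 0 ∧ (v.val = 1 ∨ v.val = 2 ∨ v.val = 3)) ∨
    (u.val = 1 ∧ (v.val = 2 ∨ v.val = 4)) ∨
    (u.val = 2 ∧ 5 ≤ v.val))

/-!
Call a vertex set *thin* if at most half of its subsets are independent; supersets of thin sets are
thin, and every non-backtracking walk of length 3 traces out a thin set. If `G` contains two
disjoint thin sets then `4 σ(G) ≤ 2 ^ n`.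

Without vertices of degree 2, every vertex of the cycle has a neighbour outside the cycle, and since
deleting the edges of the cycle separates its vertices, these neighbours are distinct. On a cycle
`x₀ x₁ x₂ x₃ x₄ ⋯` of length at least 4, extend the edges `x₁x₂` and `x₃x₄` at both ends: the two
resulting walks lie in different components of `G - x₀x₁ - x₂x₃`, which gives two disjoint thin
sets. If the cycle is a triangle, then `G` contains a net, that is, a triangle with a pendant vertex
at each corner, for which `4 σ = 2 ^ 6 + 16`. Now grow the net to all of `G`: adding a vertex `v`
adjacent to an earlier `u` adds at most the independent sets avoiding `u`, and the net without `u`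
still contains a thin set, so `4 σ ≤ 2 ^ n + 16` is preserved. The graph `U¹_n` attains this bound.
-/

section IndependentSubsets

open Finset

variable {V : Type*} {G : SimpleGraph V} {S T K L : Finset V}

open Classical in
/-- The independent subsets of `S`. Deleting vertices from `G` is modelled by shrinking `S`, so that
all the deletions stay in one vertex type. -/
noncomputable def indepSubsets (G : SimpleGraph V) (S : Finset V) : Finset (Finset V) :=
  S.powerset.filter fun s : Finset V ↦ G.IsIndepSet (s : Set V)

/-- The number of independent subsets of `S`, that is, the Merrifield–Simmons index of the subgraph
of `G` induced by `S`. -/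
noncomputable def numIndep (G : SimpleGraph V) (S : Finset V) : ℕ :=
  #(indepSubsets G S)

@[simp]
theorem mem_indepSubsets {s : Finset V} :
    s ∈ indepSubsets G S ↔ s ⊆ S ∧ G.IsIndepSet (s : Set V) := by
  simp [indepSubsets]

theorem sigmaG_eq_numIndep_univ [Fintype V] (G : SimpleGraph V) :
    sigmaG G = numIndep G univ := by
  classical
  rw [sigmaG, numIndep, ← Nat.card_eq_finsetCard]
  refine (Nat.card_congr (Fintype.finsetEquivSet.subtypeEquiv fun s ↦ ?_)).symm
  have not_adj_self (u : V) : ¬ G.Adj u u := G.irrefl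
  simp only [mem_indepSubsets, subset_univ, true_and, IsIndepSet, Set.Pairwise,
    Fintype.finsetEquivSet_apply, mem_coe]
  grind

theorem numIndep_mono (h : S ⊆ T) : numIndep G S ≤ numIndep G T :=
  card_le_card fun s hs ↦ by
    rw [mem_indepSubsets] at hs ⊢
    exact ⟨hs.1.trans h, hs.2⟩

theorem numIndep_eq_two_pow (h : G.IsIndepSet (S : Set V)) : numIndep G S = 2 ^ #S := by
  rw [numIndep, ← card_powerset]
  congr 1
  ext s
  rw [mem_indepSubsets, mem_powerset, and_iff_left_iff_imp]
  exact fun hs ↦ h.mono (coe_subset.2 hs)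

theorem numIndep_le_two_pow (G : SimpleGraph V) (S : Finset V) : numIndep G S ≤ 2 ^ #S :=
  card_powerset S ▸ card_le_card fun _ hs ↦ mem_powerset.2 (mem_indepSubsets.1 hs).1

theorem indepSubsets_insert [DecidableEq V] [DecidableRel G.Adj] (v : V) (S : Finset V) :
    indepSubsets G (insert v S) =
      indepSubsets G S ∪ (indepSubsets G {u ∈ S | ¬ G.Adj v u}).image (insert v) := by
  ext s
  simp only [mem_union, mem_image, mem_indepSubsets, IsIndepSet, Set.Pairwise, mem_coe]
  refine ⟨fun ⟨hs, h_indep⟩ ↦ ?_, ?_⟩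
  · by_cases hvs : v ∈ s
    · refine .inr ⟨s.erase v, ⟨fun u hu ↦ ?_, fun _ _ _ _ ↦ ?_⟩, insert_erase hvs⟩ <;> grind
    · exact .inl ⟨(subset_insert_iff_of_notMem hvs).1 hs, h_indep⟩
  · rintro (⟨hs, h_indep⟩ | ⟨t, ⟨ht, h_indep⟩, rfl⟩)
    · exact ⟨hs.trans (subset_insert v S), h_indep⟩
    · refine ⟨insert_subset_insert v (ht.trans (filter_subset _ S)), ?_⟩
      have adj_comm := G.adj_comm
      grind

theorem numIndep_insert [DecidableEq V] [DecidableRel G.Adj] {v : V} (hv : v ∉ S) :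
    numIndep G (insert v S) = numIndep G S + numIndep G {u ∈ S | ¬ G.Adj v u} := by
  have h_disj : Disjoint (indepSubsets G S)
      ((indepSubsets G {u ∈ S | ¬ G.Adj v u}).image (insert v)) := by
    rw [Finset.disjoint_left]
    grind [mem_indepSubsets]
  have h_inj : Set.InjOn (insert v) (indepSubsets G {u ∈ S | ¬ G.Adj v u} : Set (Finset V)) := by
    intro s hs t ht hst
    rw [mem_coe, mem_indepSubsets] at hs ht
    have hvs : v ∉ s := by grind
    have hvt : v ∉ t := by grind
    rw [← erase_insert hvs, ← erase_insert hvt, hst]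
  rw [numIndep, indepSubsets_insert, card_union_of_disjoint h_disj, card_image_of_injOn h_inj,
    ← numIndep, ← numIndep]

theorem numIndep_union_le [DecidableEq V] (G : SimpleGraph V) (S T : Finset V) :
    numIndep G (S ∪ T) ≤ numIndep G S * numIndep G T := by
  rw [numIndep, numIndep, numIndep, ← card_product]
  refine card_le_card_of_injOn (fun s ↦ (s ∩ S, s ∩ T)) (fun s hs ↦ ?_) fun s hs t ht hst ↦ ?_
  · have h_indep := (mem_indepSubsets.1 hs).2
    simp only [coe_product, Set.mem_prod, mem_coe, mem_indepSubsets, inter_subset_right, true_and]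
    exact ⟨h_indep.mono (by simp), h_indep.mono (by simp)⟩
  · rw [Prod.mk.injEq] at hst
    rw [← inter_eq_left.2 (mem_indepSubsets.1 hs).1, ← inter_eq_left.2 (mem_indepSubsets.1 ht).1,
      inter_union_distrib_left, inter_union_distrib_left, hst.1, hst.2]

theorem numIndep_mul_two_pow_card_le (h : S ⊆ T) :
    numIndep G T * 2 ^ #S ≤ numIndep G S * 2 ^ #T := by
  classical
  calc numIndep G T * 2 ^ #S = numIndep G (S ∪ T \ S) * 2 ^ #S := by
        rw [union_sdiff_of_subset h]
    _ ≤ numIndep G S * 2 ^ #(T \ S) * 2 ^ #S := by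
        gcongr
        exact (numIndep_union_le G S _).trans (by gcongr; exact numIndep_le_two_pow G _)
    _ = numIndep G S * 2 ^ #T := by
        rw [mul_assoc, ← pow_add, card_sdiff_add_card_eq_card h]

theorem numIndep_union_of_isClique [DecidableEq V] [DecidableRel G.Adj]
    (hK : G.IsClique (K : Set V)) (hKL : Disjoint K L) :
    numIndep G (K ∪ L) = numIndep G L + ∑ x ∈ K, numIndep G {u ∈ L | ¬ G.Adj x u} := by
  induction K using Finset.induction_on with
  | empty => simp
  | insert v K hv ih =>
    rw [coe_insert, isClique_insert] at hK
    obtain ⟨hvL, hKL⟩ := disjoint_insert_left.1 hKL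
    have nonadj_eq : {u ∈ K ∪ L | ¬ G.Adj v u} = {u ∈ L | ¬ G.Adj v u} := by grind
    rw [insert_union, numIndep_insert (by simp [hv, hvL]), ih hK.1 hKL, nonadj_eq, sum_insert hv]
    ring

/-- At most half of the subsets of `P` are independent in `G`. -/
def IsThin (G : SimpleGraph V) (P : Finset V) : Prop :=
  2 * numIndep G P ≤ 2 ^ #P

theorem IsThin.mono (hS : IsThin G S) (h : S ⊆ T) : IsThin G T := by
  rw [IsThin] at hS ⊢
  refine Nat.le_of_mul_le_mul_right ?_ (Nat.two_pow_pos #S)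
  calc 2 * numIndep G T * 2 ^ #S ≤ 2 * numIndep G S * 2 ^ #T := by
        rw [mul_assoc, mul_assoc]; gcongr 2 * ?_; exact numIndep_mul_two_pow_card_le h
    _ ≤ 2 ^ #S * 2 ^ #T := by gcongr
    _ = 2 ^ #T * 2 ^ #S := mul_comm _ _

theorem numIndep_pair_le_of_adj [DecidableEq V] {a b : V} (hab : G.Adj a b) :
    numIndep G {a, b} ≤ 3 := by
  classical
  have h_nonadj : ({u ∈ {b} | ¬ G.Adj a u} : Finset V) = ∅ := by grind
  calc numIndep G {a, b} = numIndep G {b} + numIndep G ∅ := by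
        rw [numIndep_insert (by simpa using hab.ne), h_nonadj]
    _ ≤ 2 ^ 1 + 2 ^ 0 := add_le_add (numIndep_le_two_pow G {b}) (numIndep_le_two_pow G ∅)

theorem isThin_of_adj_of_adj_of_adj [DecidableEq V] {a b c d : V} (hab : G.Adj a b)
    (hbc : G.Adj b c) (hcd : G.Adj c d) (hac : a ≠ c) (hbd : b ≠ d) : IsThin G {a, b, c, d} := by
  classical
  have hab_ne := hab.ne
  have hbc_ne := hbc.ne
  have hcd_ne := hcd.ne
  have h_path : numIndep G {a, b, c, d} ≤ numIndep G {a, b, d} + numIndep G ({a} \ {d}) := by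
    have hbcd : ({a, b, c, d} : Finset V) = insert c {a, b, d} := by grind
    rw [hbcd, numIndep_insert (by grind)]
    gcongr
    refine numIndep_mono fun u hu ↦ ?_
    have hcb := hbc.symm
    grind
  have h_edge := numIndep_pair_le_of_adj hab
  rw [IsThin]
  by_cases had : a = d
  · subst had
    have h_empty := numIndep_le_two_pow G ∅
    rw [show ({a, b, a} : Finset V) = {a, b} by grind, Finset.sdiff_self] at h_path
    have hcard : #{a, b, c, a} = 3 := by grind
    rw [hcard]
    rw [card_empty] at h_empty
    lia
  · have h_split : numIndep G {a, b, d} ≤ 3 * 2 := by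
      rw [show ({a, b, d} : Finset V) = {a, b} ∪ {d} by grind]
      exact (numIndep_union_le G _ _).trans (Nat.mul_le_mul h_edge (numIndep_le_two_pow G {d}))
    have h_single : numIndep G ({a} \ {d}) ≤ 2 :=
      (numIndep_mono sdiff_subset).trans (numIndep_le_two_pow G {a})
    have hcard : #{a, b, c, d} = 4 := by grind
    rw [hcard]
    lia

theorem four_mul_numIndep_univ_le_of_disjoint [Fintype V] {P Q : Finset V} (hP : IsThin G P)
    (hQ : IsThin G Q) (hPQ : Disjoint P Q) : 4 * numIndep G univ ≤ 2 ^ Fintype.card V := by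
  classical
  rw [IsThin] at hP hQ
  refine Nat.le_of_mul_le_mul_right ?_ (Nat.two_pow_pos #(P ∪ Q))
  calc 4 * numIndep G univ * 2 ^ #(P ∪ Q)
      ≤ 4 * numIndep G (P ∪ Q) * 2 ^ Fintype.card V := by
        rw [mul_assoc, mul_assoc]
        gcongr 4 * ?_
        exact numIndep_mul_two_pow_card_le (subset_univ _)
    _ ≤ 4 * (numIndep G P * numIndep G Q) * 2 ^ Fintype.card V := by
        gcongr; exact numIndep_union_le G P Q
    _ = (2 * numIndep G P) * (2 * numIndep G Q) * 2 ^ Fintype.card V := by ring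
    _ ≤ 2 ^ #P * 2 ^ #Q * 2 ^ Fintype.card V := by gcongr
    _ = 2 ^ Fintype.card V * 2 ^ #(P ∪ Q) := by
        rw [card_union_of_disjoint hPQ, pow_add, mul_comm]

theorem numIndep_insert_le_of_adj [DecidableEq V] {u v : V} (hv : v ∉ S) (huv : G.Adj u v) :
    numIndep G (insert v S) ≤ numIndep G S + numIndep G (S.erase u) := by
  classical
  rw [numIndep_insert hv]
  gcongr
  refine numIndep_mono fun w hw ↦ ?_
  have hvu := huv.symm
  grind

theorem induction_univ_of_preconnected [DecidableEq V] [Fintype V] (hG : G.Preconnected)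
    (hS : S.Nonempty) {p : Finset V → Prop} (base : p S)
    (step : ∀ T u v, S ⊆ T → u ∈ T → v ∉ T → G.Adj u v → p T → p (insert v T)) : p univ := by
  obtain ⟨T, -, ⟨hST, hT⟩, T_max⟩ :=
    (Set.toFinite {T | S ⊆ T ∧ p T}).exists_le_maximal (a := S) ⟨Subset.rfl, base⟩
  obtain rfl | hT_ne := eq_or_ne T univ
  · exact hT
  obtain ⟨v, hv⟩ : ∃ v, v ∉ T := by simpa [eq_univ_iff_forall] using hT_ne
  obtain ⟨u, hu⟩ := hS.mono hST
  obtain ⟨d, -, hd_fst, hd_snd⟩ := (hG u v).some.exists_boundary_dart T hu hv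
  have h_insert : insert d.snd T ⊆ T :=
    T_max ⟨hST.trans (subset_insert _ T), step T d.fst d.snd hST hd_fst hd_snd d.adj hT⟩
      (subset_insert _ T)
  exact absurd (h_insert (mem_insert_self _ T)) hd_snd

theorem four_mul_numIndep_univ_le_of_isThin [DecidableEq V] [Fintype V] (hG : G.Preconnected)
    (hS : S.Nonempty) {k : ℕ} (hk : 4 * numIndep G S ≤ 2 ^ #S + k)
    (hthin : ∀ u, ∃ P ⊆ S.erase u, IsThin G P) :
    4 * numIndep G univ ≤ 2 ^ Fintype.card V + k := by
  rw [← card_univ]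
  refine induction_univ_of_preconnected hG hS (p := fun T ↦ 4 * numIndep G T ≤ 2 ^ #T + k) hk
    fun T u v hST hu hv huv ih ↦ ?_
  obtain ⟨P, hPS, hP⟩ := hthin u
  have h_erase : 4 * numIndep G (T.erase u) ≤ 2 ^ #T := by
    have h_thin : 2 * numIndep G (T.erase u) ≤ 2 ^ #(T.erase u) :=
      hP.mono (hPS.trans (erase_subset_erase u hST))
    rw [← card_erase_add_one hu, pow_succ]
    lia
  have h_insert := numIndep_insert_le_of_adj hv huv
  rw [card_insert_of_notMem hv, pow_succ]
  lia

theorem four_mul_numIndep_univ_le_of_net [Fintype V] (hG : G.Preconnected) {x₀ x₁ x₂ y₀ y₁ y₂ : V}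
    (h_nodup : [x₀, x₁, x₂, y₀, y₁, y₂].Nodup) (h₀₁ : G.Adj x₀ x₁) (h₁₂ : G.Adj x₁ x₂)
    (h₂₀ : G.Adj x₂ x₀) (h₀ : G.Adj x₀ y₀) (h₁ : G.Adj x₁ y₁) (h₂ : G.Adj x₂ y₂) :
    4 * numIndep G univ ≤ 2 ^ Fintype.card V + 16 := by
  classical
  have adj_comm := G.adj_comm
  simp only [List.nodup_cons, List.mem_cons, List.not_mem_nil, or_false] at h_nodup
  refine four_mul_numIndep_univ_le_of_isThin hG (S := {x₀, x₁, x₂} ∪ {y₀, y₁, y₂}) (by simp) ?_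
    fun u ↦ ?_
  · have h_nonadj (x y : V) (hxy : G.Adj x y) (hy : y ∈ ({y₀, y₁, y₂} : Finset V)) :
        numIndep G {u ∈ {y₀, y₁, y₂} | ¬ G.Adj x u} ≤ 4 := by
      calc _ ≤ numIndep G (({y₀, y₁, y₂} : Finset V).erase y) := numIndep_mono (by grind)
        _ ≤ _ := numIndep_le_two_pow G _
        _ = 4 := by rw [card_erase_of_mem hy, show #{y₀, y₁, y₂} = 3 by grind]; rfl
    have h_leaves : numIndep G {y₀, y₁, y₂} ≤ 2 ^ 3 :=
      (numIndep_le_two_pow G _).trans (by gcongr; exacts [one_le_two, card_le_three])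
    have hcard : #({x₀, x₁, x₂} ∪ {y₀, y₁, y₂}) = 6 := by grind
    have h_clique : G.IsClique (({x₀, x₁, x₂} : Finset V) : Set V) := by
      rw [coe_insert, coe_pair, isClique_insert, isClique_pair]
      grind
    rw [numIndep_union_of_isClique h_clique (Finset.disjoint_left.2 (by grind)), hcard,
      sum_insert (by grind), sum_insert (by grind), sum_singleton]
    have h_nonadj₀ := h_nonadj x₀ y₀ h₀ (by simp)
    have h_nonadj₁ := h_nonadj x₁ y₁ h₁ (by simp)
    have h_nonadj₂ := h_nonadj x₂ y₂ h₂ (by simp)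
    lia
  · by_cases h₂u : u = x₂ ∨ u = y₂
    · exact ⟨{y₀, x₀, x₁, y₁}, by grind, isThin_of_adj_of_adj_of_adj h₀.symm h₀₁ h₁
        (by grind) (by grind)⟩
    by_cases h₁u : u = x₁ ∨ u = y₁
    · exact ⟨{y₂, x₂, x₀, y₀}, by grind, isThin_of_adj_of_adj_of_adj h₂.symm h₂₀ h₀
        (by grind) (by grind)⟩
    · exact ⟨{y₁, x₁, x₂, y₂}, by grind, isThin_of_adj_of_adj_of_adj h₁.symm h₁₂ h₂
        (by grind) (by grind)⟩

end IndependentSubsets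

section ExtremalGraph

open Finset

theorem isClique_U1n (m : ℕ) : (U1n (m + 5)).IsClique {0, 1, 2} := by
  simp [isClique_insert, U1n, fromRel_adj]

theorem isIndepSet_U1n (m : ℕ) : (U1n (m + 5)).IsIndepSet (Set.Ici 3) := by
  intro u hu v hv _
  rw [Set.mem_Ici, Fin.le_def, show (3 : Fin (m + 5)).val = 3 from rfl] at hu hv
  rw [U1n, fromRel_adj]
  lia

theorem numIndep_U1n {m : ℕ} {S : Finset (Fin (m + 5))} (hS : S ⊆ Ici 3) :
    numIndep (U1n (m + 5)) S = 2 ^ #S :=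
  numIndep_eq_two_pow ((isIndepSet_U1n m).mono (by simpa using coe_subset.2 hS))

theorem filter_not_adj_U1n (m : ℕ) [DecidableRel (U1n (m + 5)).Adj] :
    {u ∈ Ici (3 : Fin (m + 5)) | ¬ (U1n (m + 5)).Adj 0 u} = (Ici 3).erase 3 ∧
    {u ∈ Ici (3 : Fin (m + 5)) | ¬ (U1n (m + 5)).Adj 1 u} = (Ici 3).erase 4 ∧
    {u ∈ Ici (3 : Fin (m + 5)) | ¬ (U1n (m + 5)).Adj 2 u} = {3, 4} := by
  have val_1 : (1 : Fin (m + 5)).val = 1 := rfl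
  have val_2 : (2 : Fin (m + 5)).val = 2 := rfl
  have val_3 : (3 : Fin (m + 5)).val = 3 := rfl
  have val_4 : (4 : Fin (m + 5)).val = 4 := rfl
  refine ⟨?_, ?_, ?_⟩ <;> ext u <;>
    simp only [mem_filter, mem_erase, mem_insert, mem_singleton, mem_Ici, Fin.le_def, U1n,
      fromRel_adj] <;>
    lia

theorem compl_Ici_three (m : ℕ) : (Ici (3 : Fin (m + 5)))ᶜ = {0, 1, 2} := by
  have val_1 : (1 : Fin (m + 5)).val = 1 := rfl
  have val_2 : (2 : Fin (m + 5)).val = 2 := rfl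
  have val_3 : (3 : Fin (m + 5)).val = 3 := rfl
  ext u
  simp only [mem_compl, mem_insert, mem_singleton, mem_Ici, Fin.le_def]
  lia

theorem four_mul_sigmaG_U1n {n : ℕ} (hn : 5 ≤ n) : 4 * sigmaG (U1n n) = 2 ^ n + 16 := by
  classical
  obtain ⟨m, rfl⟩ := Nat.exists_eq_add_of_le' hn
  obtain ⟨nonadj_0, nonadj_1, nonadj_2⟩ := filter_not_adj_U1n m
  have h₀₂ : (0 : Fin (m + 5)) < 2 := Fin.lt_def.2 Nat.two_pos
  have h₁₂ : (1 : Fin (m + 5)) < 2 := Fin.lt_def.2 (Nat.lt_succ_self 1)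
  have h₃₄ : (3 : Fin (m + 5)) < 4 := Fin.lt_def.2 (Nat.lt_succ_self 3)
  have h₃ : (3 : Fin (m + 5)) ∈ Ici 3 := mem_Ici.2 le_rfl
  have h₄ : (4 : Fin (m + 5)) ∈ Ici 3 := mem_Ici.2 h₃₄.le
  have card_leaves : #(Ici (3 : Fin (m + 5))) = m + 2 := by
    rw [Fin.card_Ici, show (3 : Fin (m + 5)).val = 3 from rfl]
    lia
  rw [sigmaG_eq_numIndep_univ, ← union_compl (Ici 3), union_comm, compl_Ici_three,
    numIndep_union_of_isClique (by simpa using isClique_U1n m)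
      (compl_Ici_three m ▸ disjoint_compl_left),
    sum_insert (by simp [h₀₂.ne]), sum_insert (by simp [h₁₂.ne]), sum_singleton,
    nonadj_0, nonadj_1, nonadj_2,
    numIndep_U1n Subset.rfl, numIndep_U1n (erase_subset _ _), numIndep_U1n (erase_subset _ _),
    numIndep_U1n (insert_subset h₃ (singleton_subset_iff.2 h₄)), card_erase_of_mem h₃,
    card_erase_of_mem h₄, card_pair h₃₄.ne, card_leaves]
  lia

end ExtremalGraph

section Unicyclic

open Finset

variable {V : Type*} {G : SimpleGraph V}

/-- A unicyclic graph, encoded as a connected graph with as many edges as vertices. -/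
structure IsUnicyclic (G : SimpleGraph V) : Prop where
  connected : G.Connected
  ncard_edgeSet : G.edgeSet.ncard = Nat.card V

namespace IsUnicyclic

theorem exists_isCycle [Finite V] (hG : IsUnicyclic G) :
    ∃ (v : V) (c : G.Walk v v), c.IsCycle := by
  by_contra! h_acyclic
  have h_card := (isTree_iff_connected_and_card.1 ⟨hG.connected, h_acyclic⟩).2
  rw [Nat.card_coe_set_eq, hG.ncard_edgeSet] at h_card
  lia

theorem isTree_deleteEdges [Finite V] (hG : IsUnicyclic G) {v : V} {c : G.Walk v v}
    (hc : c.IsCycle) {e : Sym2 V} (he : e ∈ c.edges) : (G.deleteEdges {e}).IsTree := by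
  have h_not_bridge : ¬ G.IsBridge e := fun h ↦ h.notMem_edges_of_isCycle hc he
  refine isTree_iff_connected_and_card.2 ⟨?_, ?_⟩
  · induction e
    exact hG.connected.connected_delete_edge_of_not_isBridge h_not_bridge
  · rw [Nat.card_coe_set_eq, edgeSet_deleteEdges,
      Set.ncard_sdiff_singleton_add_one (c.edges_subset_edgeSet he), hG.ncard_edgeSet]

theorem not_reachable_deleteEdges_pair [Finite V] (hG : IsUnicyclic G) {w : V} {c : G.Walk w w}
    (hc : c.IsCycle) {e : Sym2 V} (he : e ∈ c.edges) {u v : V} (huv : G.Adj u v)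
    (hne : s(u, v) ≠ e) : ¬ (G.deleteEdges {e, s(u, v)}).Reachable u v := by
  have h_tree := (hG.isTree_deleteEdges hc he).isAcyclic
  have h_bridge := isAcyclic_iff_forall_adj_isBridge.1 h_tree (v := u) (w := v)
    (by simpa [deleteEdges_adj, huv] using hne)
  rwa [isBridge_iff, deleteEdges_deleteEdges, Set.singleton_union] at h_bridge

theorem not_reachable_deleteEdges_cycle [Finite V] (hG : IsUnicyclic G) {w : V} {c : G.Walk w w}
    (hc : c.IsCycle) {u v : V} (huv : s(u, v) ∈ c.edges) :
    ¬ (G.deleteEdges {e | e ∈ c.edges}).Reachable u v := by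
  classical
  have h_card : 1 < #c.edges.toFinset := by
    rw [List.toFinset_card_of_nodup hc.isTrail.edges_nodup, c.length_edges]
    exact one_lt_two.trans hc.three_le_length
  obtain ⟨e, he, hne⟩ := exists_mem_ne h_card s(u, v)
  rw [List.mem_toFinset] at he
  exact fun h ↦ hG.not_reachable_deleteEdges_pair hc he (c.adj_of_mem_edges huv) hne.symm
    (h.mono (G.deleteEdges_anti (Set.pair_subset he huv)))

end IsUnicyclic

theorem exists_adj_ne_ne {x : V} (hx : 2 < (G.neighborSet x).ncard) (r s : V) :
    ∃ y, G.Adj x y ∧ y ≠ r ∧ y ≠ s := by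
  classical
  obtain ⟨y, hy, hyrs⟩ := Set.exists_mem_notMem_of_ncard_lt_ncard
    (s := {r, s}) ((Set.ncard_insert_le r {s}).trans_lt (by simpa using hx))
  exact ⟨y, hy, by simpa using hyrs⟩

theorem two_lt_ncard_neighborSet_of_isCycle [Finite V] {v x : V} {c : G.Walk v v} (hc : c.IsCycle)
    (hx : x ∈ c.support) (hdeg : (G.neighborSet x).ncard ≠ 2) : 2 < (G.neighborSet x).ncard := by
  refine lt_of_le_of_ne ?_ hdeg.symm
  rw [← hc.ncard_neighborSet_toSubgraph_eq_two hx]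
  exact Set.ncard_le_ncard (c.toSubgraph.neighborSet_subset x)

theorem two_mul_length_le_card [Fintype V] (hG : IsUnicyclic G)
    (hdeg : ∀ v, (G.neighborSet v).ncard ≠ 2) {v : V} {c : G.Walk v v} (hc : c.IsCycle) :
    2 * c.length ≤ Fintype.card V := by
  classical
  set C := c.support.tail.toFinset
  have card_C : #C = c.length := by
    rw [List.toFinset_card_of_nodup hc.support_nodup, List.length_tail, c.length_support,
      Nat.add_sub_cancel]
  have : Nontrivial V := (c.adj_snd hc.not_nil).nontrivial
  have degree_ge (x : V) : (if x ∈ C then 2 else 0) + 1 ≤ G.degree x := by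
    split_ifs with hx
    · have hxc : x ∈ c.support := List.mem_of_mem_tail (List.mem_toFinset.1 hx)
      rw [← card_neighborSet_eq_degree, Set.fintypeCard_eq_ncard]
      exact two_lt_ncard_neighborSet_of_isCycle hc hxc (hdeg x)
    · exact hG.connected.preconnected.degree_pos_of_nontrivial x
  have h_sum : ∑ x, G.degree x = 2 * Fintype.card V := by
    rw [sum_degrees_eq_twice_card_edges, ← Set.ncard_coe_finset, coe_edgeFinset, hG.ncard_edgeSet,
      Nat.card_eq_fintype_card]
  have h_lower : 2 * #C + Fintype.card V ≤ ∑ x, G.degree x := by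
    calc 2 * #C + Fintype.card V = ∑ x, ((if x ∈ C then 2 else 0) + 1) := by
          simp [sum_add_distrib, mul_comm]
      _ ≤ ∑ x, G.degree x := sum_le_sum fun x _ ↦ degree_ge x
  lia

theorem four_mul_numIndep_univ_le_of_triangle [Fintype V] (hG : IsUnicyclic G)
    (hdeg : ∀ v, (G.neighborSet v).ncard ≠ 2) {x₀ x₁ x₂ : V} (h₀₁ : G.Adj x₀ x₁)
    (h₁₂ : G.Adj x₁ x₂) (h₂₀ : G.Adj x₂ x₀) :
    4 * numIndep G univ ≤ 2 ^ Fintype.card V + 16 := by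
  set c : G.Walk x₀ x₀ := .cons h₀₁ (.cons h₁₂ (.cons h₂₀ .nil)) with hc_def
  have hc : c.IsCycle := by
    simp only [hc_def, Walk.cons_isCycle_iff, Walk.cons_isPath_iff, Walk.isPath_iff_nil,
      Walk.nil_nil, Walk.support_cons, Walk.support_nil, Walk.edges_cons, Walk.edges_nil,
      List.mem_cons, List.not_mem_nil]
    grind [h₀₁.ne, h₁₂.ne, h₂₀.ne]
  have exists_pendant {x : V} (hx : x ∈ c.support) (r s : V) := exists_adj_ne_ne
    (two_lt_ncard_neighborSet_of_isCycle hc hx (hdeg x)) r s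
  obtain ⟨y₀, h₀, hy₀₁, hy₀₂⟩ := exists_pendant (x := x₀) (by simp [hc_def]) x₁ x₂
  obtain ⟨y₁, h₁, hy₁₂, hy₁₀⟩ := exists_pendant (x := x₁) (by simp [hc_def]) x₂ x₀
  obtain ⟨y₂, h₂, hy₂₀, hy₂₁⟩ := exists_pendant (x := x₂) (by simp [hc_def]) x₀ x₁
  set F := G.deleteEdges {e | e ∈ c.edges}
  have comp_ne {u v : V} (huv : s(u, v) ∈ c.edges) :
      F.connectedComponentMk u ≠ F.connectedComponentMk v :=
    fun h ↦ hG.not_reachable_deleteEdges_cycle hc huv (ConnectedComponent.exact h)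
  have h_comp₀₁ := comp_ne (u := x₀) (v := x₁) (by simp [hc_def])
  have h_comp₁₂ := comp_ne (u := x₁) (v := x₂) (by simp [hc_def])
  have h_comp₂₀ := comp_ne (u := x₂) (v := x₀) (by simp [hc_def])
  have comp_pendant {x y : V} (hxy : G.Adj x y) (hy : y ∉ c.support) :
      F.connectedComponentMk x = F.connectedComponentMk y := by
    refine ConnectedComponent.sound (Adj.reachable (deleteEdges_adj.2 ⟨hxy, fun he ↦ hy ?_⟩))
    exact c.snd_mem_support_of_mem_edges he
  have h_comp₀ := comp_pendant h₀ (by simp [hc_def, hy₀₁, hy₀₂, h₀.ne'])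
  have h_comp₁ := comp_pendant h₁ (by simp [hc_def, hy₁₂, hy₁₀, h₁.ne'])
  have h_comp₂ := comp_pendant h₂ (by simp [hc_def, hy₂₀, hy₂₁, h₂.ne'])
  refine four_mul_numIndep_univ_le_of_net hG.connected.preconnected ?_ h₀₁ h₁₂ h₂₀ h₀ h₁ h₂
  simp only [List.nodup_cons, List.mem_cons, List.not_mem_nil, or_false]
  grind [h₀.ne, h₁.ne, h₂.ne]

theorem exists_isThin_of_deleteEdges_adj {D : Set (Sym2 V)} {x z r t : V}
    (hx : 2 < (G.neighborSet x).ncard) (hz : 2 < (G.neighborSet z).ncard)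
    (hxz : (G.deleteEdges D).Adj x z) (hr : ∀ y, s(x, y) ∈ D → y = r)
    (ht : ∀ y, s(z, y) ∈ D → y = t) :
    ∃ P, IsThin G P ∧ ∀ u ∈ P, (G.deleteEdges D).Reachable x u := by
  classical
  obtain ⟨y, hxy, hyz, hyr⟩ := exists_adj_ne_ne hx z r
  obtain ⟨w, hzw, hwx, hwt⟩ := exists_adj_ne_ne hz x t
  have hxy_reach := (deleteEdges_adj.2 ⟨hxy, fun h ↦ hyr (hr y h)⟩).reachable
  have hzw_reach := (deleteEdges_adj.2 ⟨hzw, fun h ↦ hwt (ht w h)⟩).reachable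
  refine ⟨{y, x, z, w}, isThin_of_adj_of_adj_of_adj hxy.symm (deleteEdges_adj.1 hxz).1 hzw hyz
    hwx.symm, ?_⟩
  simpa using ⟨hxy_reach, hxz.reachable, hxz.reachable.trans hzw_reach⟩

theorem four_mul_numIndep_univ_le_of_four_le_length [Fintype V] (hG : IsUnicyclic G)
    (hdeg : ∀ v, (G.neighborSet v).ncard ≠ 2) {x₀ x₁ x₂ x₃ x₄ : V} {h₀₁ : G.Adj x₀ x₁}
    {h₁₂ : G.Adj x₁ x₂} {h₂₃ : G.Adj x₂ x₃} {h₃₄ : G.Adj x₃ x₄} {p : G.Walk x₄ x₀}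
    (hc : (Walk.cons h₀₁ (.cons h₁₂ (.cons h₂₃ (.cons h₃₄ p)))).IsCycle) :
    4 * numIndep G univ ≤ 2 ^ Fintype.card V := by
  have two_lt {x : V} (hx) := two_lt_ncard_neighborSet_of_isCycle (x := x) hc hx (hdeg x)
  obtain ⟨hx₁₀, hx₁₂, hx₁₃, hx₁₄, hx₂₀, hx₂₃, hx₂₄, hx₃₀, hx₃₄⟩ : x₁ ≠ x₀ ∧ x₁ ≠ x₂ ∧
      x₁ ≠ x₃ ∧ x₁ ≠ x₄ ∧ x₂ ≠ x₀ ∧ x₂ ≠ x₃ ∧ x₂ ≠ x₄ ∧ x₃ ≠ x₀ ∧ x₃ ≠ x₄ := by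
    have h_nodup := hc.support_nodup
    simp only [Walk.support_cons, List.tail_cons, List.nodup_cons, List.mem_cons] at h_nodup
    have hx₀ := p.end_mem_support
    have hx₄ := p.start_mem_support
    grind
  set D : Set (Sym2 V) := {s(x₀, x₁), s(x₂, x₃)} with hD
  have mem_D {u v : V} : s(u, v) ∈ D ↔
      (u = x₀ ∧ v = x₁ ∨ u = x₁ ∧ v = x₀) ∨ u = x₂ ∧ v = x₃ ∨ u = x₃ ∧ v = x₂ := by
    rw [hD, Set.mem_insert_iff, Set.mem_singleton_iff, Sym2.eq_iff, Sym2.eq_iff]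
  have h_sep : ¬ (G.deleteEdges D).Reachable x₂ x₃ :=
    hG.not_reachable_deleteEdges_pair hc (by simp) h₂₃ (by simp [hx₂₀, hx₃₀])
  have h₂₁_adj : (G.deleteEdges D).Adj x₂ x₁ :=
    deleteEdges_adj.2 ⟨h₁₂.symm, by rw [mem_D]; grind⟩
  have h₃₄_adj : (G.deleteEdges D).Adj x₃ x₄ :=
    deleteEdges_adj.2 ⟨h₃₄, by rw [mem_D]; grind⟩
  obtain ⟨P, hP, hP_reach⟩ := exists_isThin_of_deleteEdges_adj (r := x₃) (t := x₀)
    (two_lt (by simp)) (two_lt (by simp)) h₂₁_adj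
    (fun y hy ↦ by rw [mem_D] at hy; grind) (fun y hy ↦ by rw [mem_D] at hy; grind)
  obtain ⟨Q, hQ, hQ_reach⟩ := exists_isThin_of_deleteEdges_adj (r := x₂) (t := x₁)
    (two_lt (by simp)) (two_lt (by simp)) h₃₄_adj
    (fun y hy ↦ by rw [mem_D] at hy; grind) (fun y hy ↦ by rw [mem_D] at hy; grind)
  exact four_mul_numIndep_univ_le_of_disjoint hP hQ <| Finset.disjoint_left.2 fun u hu hu' ↦
    h_sep ((hP_reach u hu).trans (hQ_reach u hu').symm)

theorem four_mul_sigmaG_le [Fintype V] (hG : IsUnicyclic G)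
    (hdeg : ∀ v, (G.neighborSet v).ncard ≠ 2) : 4 * sigmaG G ≤ 2 ^ Fintype.card V + 16 := by
  rw [sigmaG_eq_numIndep_univ]
  obtain ⟨_, c, hc⟩ := hG.exists_isCycle
  have h_length := hc.three_le_length
  rcases c with _ | ⟨h₀₁, _ | ⟨h₁₂, _ | ⟨h₂₃, _ | ⟨h₃₄, p⟩⟩⟩⟩ <;>
    simp only [Walk.length_cons, Walk.length_nil] at h_length
  any_goals lia
  · exact four_mul_numIndep_univ_le_of_triangle hG hdeg h₀₁ h₁₂ h₂₃
  · exact (four_mul_numIndep_univ_le_of_four_le_length hG hdeg hc).trans (Nat.le_add_right _ 16)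

theorem six_le_card [Fintype V] (hG : IsUnicyclic G) (hdeg : ∀ v, (G.neighborSet v).ncard ≠ 2) :
    6 ≤ Fintype.card V := by
  obtain ⟨_, c, hc⟩ := hG.exists_isCycle
  calc 6 ≤ 2 * c.length := Nat.mul_le_mul_left 2 hc.three_le_length
    _ ≤ Fintype.card V := two_mul_length_le_card hG hdeg hc

theorem ncard_neighborSet_ne_two
    (hseg : ∀ u v, G.Adj u v → (G.neighborSet u).ncard ≠ 2 ∧ (G.neighborSet v).ncard ≠ 2) (v : V) :
    (G.neighborSet v).ncard ≠ 2 := by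
  intro hv
  obtain ⟨u, hu⟩ : (G.neighborSet v).Nonempty := Set.nonempty_of_ncard_ne_zero (by lia)
  exact (hseg v u hu).1 hv

end Unicyclic

/-- among `n`-vertex unicyclic graphs all of whose segments have
length `1` (i.e. every edge joins two vertices of degree `≠ 2`), the graph `U¹_n`
maximizes the Merrifield–Simmons index. -/
theorem sigma_all_short_segments (n : ℕ) (hn : 3 ≤ n) (G : SimpleGraph (Fin n))
    (hconn : G.Connected) (hedges : G.edgeSet.ncard = n)
    (hseg : ∀ u v, G.Adj u v →
      (G.neighborSet u).ncard ≠ 2 ∧ (G.neighborSet v).ncard ≠ 2) :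
    sigmaG G ≤ sigmaG (U1n n) := by
  have hdeg := ncard_neighborSet_ne_two hseg
  have hG : IsUnicyclic G := ⟨hconn, by rw [hedges, Nat.card_fin]⟩
  have h_card := six_le_card hG hdeg
  have h_upper := four_mul_sigmaG_le hG hdeg
  rw [Fintype.card_fin] at h_card h_upper
  have h_extremal := four_mul_sigmaG_U1n ((Nat.le_succ 5).trans h_card)
  lia
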